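/- Suppose the pair (𝒫,𝒟) satisfies conditions (T1)–(T3), and let (n_k)_{k≥1} be a strictly increasing sequence of integers with n_k > 7 and Φ(n_k + 1) ≥ 3 for all k. Then there exists ε > 0 such that for every k ≥ 1, every ξ with |ξ| < 1, every σ ∈ {−1,1}^ℕ, every admissible α, and every λ ∈ Λ_{n_k}^{σ,α}, one has ∏_{j=2}^{∞} |m_{𝒟_{n_k+j}}((ξ + λ)/P_{n_k+j})| > ε. -/

import Mathlib

open MeasureTheory Filter Finset Real
open scoped ENNReal NNReal

noncomputable section

/-- `P n = p 1 * p 2 * ⋯ * p n`. -/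
def Pprod (p : ℕ → ℕ) (n : ℕ) : ℕ := ∏ i ∈ Finset.Icc 1 n, p i

/-- The uniform probability measure on the finite set `s • E ⊆ ℝ`. -/
def unifD (E : Finset ℕ) (s : ℝ) : Measure ℝ :=
  (E.card : ℝ≥0∞)⁻¹ • ∑ d ∈ E, Measure.dirac (s * (d : ℝ))

/-- The finite convolutions `μ_n = δ_{P₁⁻¹D₁} ∗ ⋯ ∗ δ_{Pₙ⁻¹Dₙ}`. -/
def muN (p : ℕ → ℕ) (D : ℕ → Finset ℕ) : ℕ → Measure ℝ
  | 0 => Measure.dirac 0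
  | n + 1 => Measure.conv (muN p D n) (unifD (D (n + 1)) ((Pprod p (n + 1) : ℝ)⁻¹))

/-- `μ` is the weak limit of the sequence of measures `ν n`. -/
def IsWeakLimit (ν : ℕ → Measure ℝ) (μ : Measure ℝ) : Prop :=
  ∀ f : BoundedContinuousFunction ℝ ℝ,
    Tendsto (fun n => ∫ x, f x ∂ν n) atTop (nhds (∫ x, f x ∂μ))

/-- `μ` is the Moran measure attached to `(p, D)`: the infinite convolution
`δ_{P₁⁻¹D₁} ∗ δ_{P₂⁻¹D₂} ∗ ⋯`, in the sense of weak convergence. -/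
def IsMoran (p : ℕ → ℕ) (D : ℕ → Finset ℕ) (μ : Measure ℝ) : Prop :=
  IsProbabilityMeasure μ ∧ IsWeakLimit (muN p D) μ

/-- The exponentials `e_λ, λ ∈ Λ` are pairwise orthogonal in `L²(μ)`. -/
def IsOrthSet (μ : Measure ℝ) (Λ : Set ℝ) : Prop :=
  ∀ l ∈ Λ, ∀ l' ∈ Λ, l ≠ l' →
    ∫ x : ℝ, Complex.exp (2 * Real.pi * Complex.I * (l - l') * x) ∂μ = 0

/-- `Λ` is a spectrum of `μ`: the exponentials `e_λ, λ ∈ Λ` form an orthonormal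
basis of `L²(μ)` (orthonormal + maximal, i.e. complete). -/
def IsSpectrum (μ : Measure ℝ) (Λ : Set ℝ) : Prop :=
  IsOrthSet μ Λ ∧
  ∀ f : ℝ → ℂ, MemLp f 2 μ →
    (∀ l ∈ Λ, ∫ x : ℝ, f x * Complex.exp (-(2 * Real.pi * Complex.I * l * x)) ∂μ = 0) →
    f =ᵐ[μ] 0

def IsSpectralMeasure (μ : Measure ℝ) : Prop := ∃ Λ : Set ℝ, Λ.Countable ∧ IsSpectrum μ Λ

/-- Condition (T1): `D n = {0,1,…,N-1}` with `3 < N`, `N ∣ p n`, `N < p n`. -/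
def T1cond (p : ℕ → ℕ) (D : ℕ → Finset ℕ) (n : ℕ) : Prop :=
  ∃ N : ℕ, 3 < N ∧ N ∣ p n ∧ N < p n ∧ D n = Finset.range N

/-- Condition (T2) (except for the global sup condition): `D n = {0,a,b}`,
`0 < a < b`, `gcd(a,b) = 1`, `{a,b} ≡ {1,2} (mod 3)`, `3 ∣ p n`. -/
def T2cond (p : ℕ → ℕ) (D : ℕ → Finset ℕ) (n : ℕ) : Prop :=
  ∃ a b : ℕ, 0 < a ∧ a < b ∧ Nat.gcd a b = 1 ∧
    (a % 3 = 1 ∧ b % 3 = 2 ∨ a % 3 = 2 ∧ b % 3 = 1) ∧ 3 ∣ p n ∧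
    D n = ({0, a, b} : Finset ℕ)

/-- Condition (T3): `D n = {0,d}` with `0 < d < p n` and `p n / gcd (d, p n)` even.
(The decomposition `d = 2^l d'` with `d'` odd always exists, with `l` the 2-adic
valuation of `d`.) -/
def T3cond (p : ℕ → ℕ) (D : ℕ → Finset ℕ) (n : ℕ) : Prop :=
  ∃ d : ℕ, 0 < d ∧ d < p n ∧ 2 ∣ p n / Nat.gcd d (p n) ∧ D n = ({0, d} : Finset ℕ)

/-- The pair `(p, D)` satisfies conditions (T1)–(T3), including the requirement
`sup {b n / p n : n of type (T2)} < 2/3`. -/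
def SatisfiesT (p : ℕ → ℕ) (D : ℕ → Finset ℕ) : Prop :=
  (∀ n, 1 ≤ n → T1cond p D n ∨ T2cond p D n ∨ T3cond p D n) ∧
  ∃ c : ℝ, c < 2 / 3 ∧ ∀ n, 1 ≤ n → T2cond p D n → (((D n).sup id : ℕ) : ℝ) / (p n : ℝ) ≤ c

/-- `σ ∈ {-1,1}^ℕ`. -/
def IsSigma (σ : ℕ → ℤ) : Prop := ∀ n, σ n = 1 ∨ σ n = -1

/-- `α` is admissible: `α m ∈ {-⌊N/2⌋, …, N - 1 - ⌊N/2⌋}` where `N = #(D m)`,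
for every `m` with `#(D m) = N_m > 3`. -/
def Admissible (D : ℕ → Finset ℕ) (α : ℕ → ℤ) : Prop :=
  ∀ m, 1 ≤ m → 3 < (D m).card →
    -(((D m).card / 2 : ℕ) : ℤ) ≤ α m ∧
      α m ≤ ((D m).card : ℤ) - 1 - (((D m).card / 2 : ℕ) : ℤ)

/-- The largest element `d n` (resp. `b n`) of `D n`. -/
def bOf (D : ℕ → Finset ℕ) (n : ℕ) : ℕ := (D n).sup id

/-- The middle element `a n` of a digit set `{0, a, b}`. -/
def aOf (D : ℕ → Finset ℕ) (n : ℕ) : ℕ := (((D n).erase 0).erase ((D n).sup id)).sup id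

/-- `l n`: the 2-adic valuation of `d n`, i.e. `d n = 2^(l n) * d'` with `d'` odd. -/
def lOf (D : ℕ → Finset ℕ) (n : ℕ) : ℕ := padicValNat 2 ((D n).sup id)

/-- The finite set `Λ_n^{σ,α}`. -/
def LamN (p : ℕ → ℕ) (D : ℕ → Finset ℕ) (σ α : ℕ → ℤ) (n : ℕ) : Set ℝ :=
  { x | ∃ c : ℕ → ℝ,
      (∀ i, (D i).card = 2 → c i = 0 ∨ c i = (σ i : ℝ) / 2 ^ (1 + lOf D i)) ∧
      (∀ i, (D i).card = 3 → c i = 0 ∨ c i = 1 / 3 ∨ c i = -(1 / 3)) ∧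
      (∀ i, 3 < (D i).card → c i = (α i : ℝ) / ((D i).card : ℝ)) ∧
      x = ∑ i ∈ Finset.Icc 1 n, (Pprod p i : ℝ) * c i }

/-- `Λ^{σ,α} = ⋃_{n ≥ 1} Λ_n^{σ,α}`. -/
def Lam (p : ℕ → ℕ) (D : ℕ → Finset ℕ) (σ α : ℕ → ℤ) : Set ℝ :=
  ⋃ n ∈ Set.Ici 1, LamN p D σ α n

/-- The Fourier transform `μ̂(ξ) = ∫ e^{-2πixξ} dμ(x)`. -/
def FT (μ : Measure ℝ) (ξ : ℝ) : ℂ :=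
  ∫ x : ℝ, Complex.exp (-(2 * Real.pi * Complex.I * x * ξ)) ∂μ

/-- The mask polynomial `m_E(t) = (1/#E) ∑_{d ∈ E} e^{2πidt}`. -/
def mask (E : Finset ℕ) (t : ℝ) : ℂ :=
  (E.card : ℂ)⁻¹ * ∑ d ∈ E, Complex.exp (2 * Real.pi * Complex.I * (d : ℝ) * t)

end

noncomputable section

lemma aux_c (p : ℕ → ℕ) (D : ℕ → Finset ℕ) (hT : SatisfiesT p D) (σ α : ℕ → ℤ)
    (hσ : IsSigma σ) (hα : Admissible D α) (c : ℕ → ℝ)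
    (h1 : ∀ i, (D i).card = 2 → c i = 0 ∨ c i = (σ i : ℝ) / 2 ^ (1 + lOf D i))
    (h2 : ∀ i, (D i).card = 3 → c i = 0 ∨ c i = 1 / 3 ∨ c i = -(1 / 3))
    (h3 : ∀ i, 3 < (D i).card → c i = (α i : ℝ) / ((D i).card : ℝ))
    (i : ℕ) (hi : 1 ≤ i) : |c i| ≤ 1 / 2 := by
  have hcard : 2 ≤ (D i).card := by
    rcases hT.1 i hi with ⟨N, hN, -, -, hD⟩ | ⟨a, b, ha, hab, -, -, -, hD⟩ | ⟨d, hd, -, -, hD⟩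
    · rw [hD, Finset.card_range]; omega
    · rw [hD]
      have : ({0, a} : Finset ℕ) ⊆ {0, a, b} := by
        intro x; simp only [Finset.mem_insert, Finset.mem_singleton]; tauto
      have h := Finset.card_le_card this
      rwa [Finset.card_pair (by omega)] at h
    · rw [hD, Finset.card_pair (by omega)]
  rcases (by omega : (D i).card = 2 ∨ (D i).card = 3 ∨ 3 < (D i).card) with h | h | h
  · rcases h1 i h with h | h
    · rw [h]; norm_num
    · rw [h, abs_div]
      have hs : |(σ i : ℝ)| = 1 := by rcases hσ i with h | h <;> rw [h] <;> norm_num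
      rw [hs, abs_of_pos (by positivity)]
      have : (1 : ℝ) ≤ 2 ^ (lOf D i) := one_le_pow₀ (by norm_num)
      apply one_div_le_one_div_of_le (by norm_num)
      rw [pow_add]; linarith
  · rcases h2 i h with h | h | h <;> rw [h] <;> norm_num [abs_le]
  · rw [h3 i h]
    obtain ⟨hl, hu⟩ := hα i hi h
    have hN : (0 : ℝ) < (D i).card := by exact_mod_cast (by omega : 0 < (D i).card)
    rw [abs_div, abs_of_pos hN, div_le_iff₀ hN]
    have e1 : -((D i).card : ℤ) ≤ 2 * α i := by omega
    have e2 : 2 * α i ≤ ((D i).card : ℤ) := by omega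
    have e1' : -((D i).card : ℝ) ≤ 2 * α i := by exact_mod_cast e1
    have e2' : 2 * (α i : ℝ) ≤ ((D i).card : ℝ) := by exact_mod_cast e2
    rw [abs_le]; constructor <;> linarith

lemma Pprod_succ' (p : ℕ → ℕ) (n : ℕ) : Pprod p (n + 1) = Pprod p n * p (n + 1) := by
  unfold Pprod
  rw [Finset.prod_Icc_succ_top (by omega)]

lemma Pprod_pos' (p : ℕ → ℕ) (hp : ∀ n, 1 ≤ n → 1 < p n) (n : ℕ) : 0 < Pprod p n := by
  unfold Pprod
  apply Finset.prod_pos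
  intro i hi
  have := hp i (Finset.mem_Icc.mp hi).1
  omega

lemma aux_sum (p : ℕ → ℕ) (hp : ∀ n, 1 ≤ n → 1 < p n) (c : ℕ → ℝ)
    (hc : ∀ i, 1 ≤ i → |c i| ≤ 1 / 2) (n : ℕ) :
    1 + |∑ i ∈ Finset.Icc 1 n, (Pprod p i : ℝ) * c i| ≤ Pprod p n := by
  induction n with
  | zero => simp [Pprod]
  | succ n ih =>
    rw [Finset.sum_Icc_succ_top (by omega)]
    have hP : (0 : ℝ) < Pprod p n := by exact_mod_cast Pprod_pos' p hp n
    have hP' : (0 : ℝ) < Pprod p (n + 1) := by exact_mod_cast Pprod_pos' p hp (n + 1)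
    have h2 : (2 : ℝ) ≤ p (n + 1) := by exact_mod_cast hp (n + 1) (by omega)
    have h3 : (Pprod p (n + 1) : ℝ) = Pprod p n * p (n + 1) := by
      exact_mod_cast Pprod_succ' p n
    have h4 := abs_add_le (∑ i ∈ Finset.Icc 1 n, (Pprod p i : ℝ) * c i)
      ((Pprod p (n + 1) : ℝ) * c (n + 1))
    have h5 : |(Pprod p (n + 1) : ℝ) * c (n + 1)| ≤ Pprod p (n + 1) * (1 / 2) := by
      rw [abs_mul, abs_of_pos hP']
      exact mul_le_mul_of_nonneg_left (hc _ (by omega)) hP'.le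
    nlinarith

lemma aux_digit (p : ℕ → ℕ) (D : ℕ → Finset ℕ) (hp : ∀ n, 1 ≤ n → 1 < p n)
    (hT : SatisfiesT p D) (m : ℕ) (hm : 1 ≤ m) :
    (D m).Nonempty ∧ ∀ d ∈ D m, d ≤ p m := by
  rcases hT.1 m hm with ⟨N, hN, -, hNp, hD⟩ | h | ⟨d, hd, hdp, -, hD⟩
  · rw [hD]
    refine ⟨⟨0, by simp; omega⟩, fun d hd => ?_⟩
    have := Finset.mem_range.mp hd
    omega
  · obtain ⟨c, hc, hb⟩ := hT.2
    have hb := hb m hm h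
    obtain ⟨a, b, ha, hab, -, -, -, hD⟩ := h
    refine ⟨⟨0, by rw [hD]; simp⟩, fun d hd => ?_⟩
    have hle : d ≤ (D m).sup id := Finset.le_sup (f := id) hd
    have hpm : (0 : ℝ) < p m := by
      have := hp m hm
      exact_mod_cast (by omega : 0 < p m)
    rw [div_le_iff₀ hpm] at hb
    have : (((D m).sup id : ℕ) : ℝ) ≤ p m := by nlinarith
    have : (D m).sup id ≤ p m := by exact_mod_cast this
    omega
  · rw [hD]
    refine ⟨⟨0, by simp⟩, fun e he => ?_⟩
    simp only [Finset.mem_insert, Finset.mem_singleton] at he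
    omega

lemma aux_six (p : ℕ → ℕ) (D : ℕ → Finset ℕ) (hp : ∀ n, 1 ≤ n → 1 < p n)
    (hT : SatisfiesT p D) (m : ℕ) (hm : 1 ≤ m) (h3 : 3 ≤ (D m).card) : 6 ≤ p m := by
  rcases hT.1 m hm with ⟨N, hN, ⟨q, hq⟩, hNp, hD⟩ | h | ⟨d, hd, hdp, -, hD⟩
  · have : 2 ≤ q := by
      by_contra hlt
      have : q = 0 ∨ q = 1 := by omega
      rcases this with rfl | rfl <;> omega
    nlinarith
  · obtain ⟨c, hc, hb⟩ := hT.2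
    have hb := hb m hm h
    obtain ⟨a, b, ha, hab, -, -, h3p, hD⟩ := h
    have hle : b ≤ (D m).sup id := Finset.le_sup (f := id) (by rw [hD]; simp)
    have hpp := hp m hm
    by_contra hlt
    have hp3 : p m = 3 := by omega
    rw [hp3] at hb
    have h2 : (2 : ℝ) ≤ (((D m).sup id : ℕ) : ℝ) := by
      exact_mod_cast (by omega : 2 ≤ (D m).sup id)
    push_cast at hb
    linarith
  · rw [hD, Finset.card_pair (by omega)] at h3
    omega

lemma aux_mask (E : Finset ℕ) (hE : E.Nonempty) (t s : ℝ) (h : ∀ d ∈ E, |(d : ℝ) * t| ≤ s) :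
    1 - 20 * s ^ 2 ≤ ‖mask E t‖ := by
  have hcard : (0 : ℝ) < E.card := by exact_mod_cast hE.card_pos
  have hre : (mask E t).re = (E.card : ℝ)⁻¹ * ∑ d ∈ E, Real.cos (2 * Real.pi * (d * t)) := by
    unfold mask
    have : ((E.card : ℂ)⁻¹) = (((E.card : ℝ)⁻¹ : ℝ) : ℂ) := by push_cast; rfl
    rw [this, Complex.re_ofReal_mul, Complex.re_sum]
    congr 1
    apply Finset.sum_congr rfl
    intro d _
    have : (2 * Real.pi * Complex.I * (d : ℝ) * t : ℂ)
        = ((2 * Real.pi * (d * t) : ℝ) : ℂ) * Complex.I := by push_cast; ring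
    rw [this, Complex.exp_ofReal_mul_I_re]
  refine le_trans ?_ (Complex.re_le_norm _)
  rw [hre, inv_mul_eq_div, le_div_iff₀ hcard, mul_comm, ← nsmul_eq_mul]
  apply Finset.card_nsmul_le_sum
  intro d hd
  refine le_trans ?_ (Real.one_sub_sq_div_two_le_cos)
  have h1 : ((d : ℝ) * t) ^ 2 ≤ s ^ 2 := by
    rw [← sq_abs]
    exact pow_le_pow_left₀ (abs_nonneg _) (h d hd) 2
  have hpi : Real.pi ^ 2 ≤ 10 := by nlinarith [Real.pi_lt_d2, Real.pi_pos]
  have h2 : Real.pi ^ 2 * ((d : ℝ) * t) ^ 2 ≤ 10 * s ^ 2 :=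
    mul_le_mul hpi h1 (sq_nonneg _) (by norm_num)
  nlinarith

lemma aux_weier (f a : ℕ → ℝ) (ha : ∀ i, 0 ≤ a i) (ha1 : ∀ i, a i ≤ 1)
    (hf : ∀ i, 1 - a i ≤ f i) (s : Finset ℕ) :
    1 - ∑ i ∈ s, a i ≤ ∏ i ∈ s, f i := by
  have h0 : 1 - ∑ i ∈ s, a i ≤ ∏ i ∈ s, (1 - a i) := by
    induction s using Finset.induction_on with
    | empty => simp
    | insert x s hx ih =>
      rw [Finset.sum_insert hx, Finset.prod_insert hx]
      have hs : 0 ≤ ∑ i ∈ s, a i := Finset.sum_nonneg fun i _ => ha i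
      have := mul_le_mul_of_nonneg_left ih (sub_nonneg.mpr (ha1 x))
      nlinarith [mul_nonneg (ha x) hs]
  exact h0.trans (Finset.prod_le_prod (fun i _ => sub_nonneg.mpr (ha1 i)) fun i _ => hf i)

lemma aux_P (p : ℕ → ℕ) (hp : ∀ n, 1 ≤ n → 1 < p n) (n j : ℕ) :
    (Pprod p n : ℝ) * 2 ^ j ≤ Pprod p (n + j) := by
  induction j with
  | zero => simp
  | succ j ih =>
    have h2 : (2 : ℝ) ≤ p (n + j + 1) := by exact_mod_cast hp (n + j + 1) (by omega)
    have h3 : (Pprod p (n + (j + 1)) : ℝ) = Pprod p (n + j) * p (n + j + 1) := by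
      exact_mod_cast Pprod_succ' p (n + j)
    rw [h3, pow_succ, ← mul_assoc]
    exact mul_le_mul ih h2 (by norm_num) (by positivity)

/-- Proposition 4.4. If `n_k > 7` and `#(D (n_k + 1)) ≥ 3`, then
the tail products `∏_{j=2}^∞ |m_{D_{n_k+j}}((ξ+λ)/P_{n_k+j})|` are bounded below by a
uniform `ε > 0` for `|ξ| < 1` and `λ ∈ Λ_{n_k}^{σ,α}`. -/
theorem tail_product_lower_bound (p : ℕ → ℕ) (D : ℕ → Finset ℕ)
    (hp : ∀ n, 1 ≤ n → 1 < p n) (hT : SatisfiesT p D)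
    (n : ℕ → ℕ) (hmono : StrictMono n) (h7 : ∀ k, 7 < n k)
    (h3 : ∀ k, 3 ≤ (D (n k + 1)).card) :
    ∃ ε : ℝ, 0 < ε ∧ ∀ k, ∀ ξ : ℝ, |ξ| < 1 →
      ∀ σ α : ℕ → ℤ, IsSigma σ → Admissible D α → ∀ l ∈ LamN p D σ α (n k),
        ε < ∏' j : ℕ, ‖mask (D (n k + (j + 2))) ((ξ + l) / (Pprod p (n k + (j + 2)) : ℝ))‖ := by
  refine ⟨1 / 4, by norm_num, ?_⟩
  intro k ξ hξ σ α hσ hα l hl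
  obtain ⟨c, h1, h2, h3', hl⟩ := hl
  have hc := aux_c p D hT σ α hσ hα c h1 h2 h3'
  have hS := aux_sum p hp c hc (n k)
  rw [← hl] at hS
  have hx : |ξ + l| ≤ Pprod p (n k) := by
    have := abs_add_le ξ l
    linarith
  have h6 : (6 : ℝ) ≤ p (n k + 1) := by
    exact_mod_cast aux_six p D hp hT (n k + 1) (by omega) (h3 k)
  set f : ℕ → ℝ := fun j =>
    ‖mask (D (n k + (j + 2))) ((ξ + l) / (Pprod p (n k + (j + 2)) : ℝ))‖ with hfdef
  have hf : ∀ j, 1 - 5 / 9 * (1 / 4 : ℝ) ^ j ≤ f j := by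
    intro j
    obtain ⟨hne, hd⟩ := aux_digit p D hp hT (n k + (j + 2)) (by omega)
    have hP : (0 : ℝ) < Pprod p (n k) := by exact_mod_cast Pprod_pos' p hp (n k)
    have hPm : (0 : ℝ) < Pprod p (n k + (j + 2)) := by
      exact_mod_cast Pprod_pos' p hp (n k + (j + 2))
    have e1 : (Pprod p (n k + 1) : ℝ) = Pprod p (n k) * p (n k + 1) := by
      exact_mod_cast Pprod_succ' p (n k)
    have e2 : (Pprod p (n k + (j + 2)) : ℝ)
        = Pprod p (n k + 1 + j) * p (n k + (j + 2)) := by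
      have := Pprod_succ' p (n k + 1 + j)
      rw [show n k + 1 + j + 1 = n k + (j + 2) by ring] at this
      exact_mod_cast this
    have e3 := aux_P p hp (n k + 1) j
    have key := aux_mask (D (n k + (j + 2))) hne
      ((ξ + l) / (Pprod p (n k + (j + 2)) : ℝ)) (1 / 6 * (1 / 2) ^ j) (by
        intro d hdm
        have hdp : (d : ℝ) ≤ p (n k + (j + 2)) := by exact_mod_cast hd d hdm
        rw [abs_mul, abs_div, abs_of_pos hPm, abs_of_nonneg (Nat.cast_nonneg d),
          ← mul_div_assoc, div_le_iff₀ hPm]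
        have g1 : (d : ℝ) * |ξ + l| ≤ p (n k + (j + 2)) * Pprod p (n k) :=
          mul_le_mul hdp hx (abs_nonneg _) (Nat.cast_nonneg _)
        have g2 : (6 * Pprod p (n k) : ℝ) * 2 ^ j ≤ Pprod p (n k + 1 + j) := by
          refine le_trans (mul_le_mul_of_nonneg_right ?_ (by positivity)) e3
          rw [e1]; nlinarith
        have g3 : (Pprod p (n k) : ℝ) ≤ 1 / 6 * (1 / 2) ^ j * Pprod p (n k + 1 + j) := by
          have hh : (1 / 2 : ℝ) ^ j * 2 ^ j = 1 := by rw [← mul_pow]; norm_num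
          have := mul_le_mul_of_nonneg_left g2
            (by positivity : (0 : ℝ) ≤ 1 / 6 * (1 / 2) ^ j)
          calc (Pprod p (n k) : ℝ) = Pprod p (n k) * ((1 / 2 : ℝ) ^ j * 2 ^ j) := by
                rw [hh, mul_one]
            _ = 1 / 6 * (1 / 2) ^ j * (6 * Pprod p (n k) * 2 ^ j) := by ring
            _ ≤ _ := this
        rw [e2]
        calc (d : ℝ) * |ξ + l| ≤ p (n k + (j + 2)) * Pprod p (n k) := g1
          _ ≤ p (n k + (j + 2)) * (1 / 6 * (1 / 2) ^ j * Pprod p (n k + 1 + j)) :=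
            mul_le_mul_of_nonneg_left g3 (Nat.cast_nonneg _)
          _ = _ := by ring)
    refine le_trans (le_of_eq ?_) key
    rw [mul_pow, ← pow_mul, mul_comm j 2, pow_mul]
    norm_num
    ring
  by_cases hm : Multipliable f
  · have hprod : ∀ s : Finset ℕ, (7 / 27 : ℝ) ≤ ∏ i ∈ s, f i := by
      intro s
      refine le_trans ?_ (aux_weier f (fun j => 5 / 9 * (1 / 4 : ℝ) ^ j)
        (fun i => by positivity) (fun i => ?_) hf s)
      · have hg := (hasSum_geometric_of_lt_one (r := (1 / 4 : ℝ)) (by norm_num)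
          (by norm_num)).mul_left (5 / 9)
        have := sum_le_hasSum s (fun i _ => by positivity) hg
        norm_num at this ⊢
        linarith
      · have : (1 / 4 : ℝ) ^ i ≤ 1 := pow_le_one₀ (by norm_num) (by norm_num)
        show 5 / 9 * (1 / 4 : ℝ) ^ i ≤ 1
        linarith
    have : (7 / 27 : ℝ) ≤ ∏' j, f j := ge_of_tendsto' hm.hasProd hprod
    exact lt_of_lt_of_le (by norm_num) this
  · rw [tprod_eq_one_of_not_multipliable hm]
    norm_num

end
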